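/- Let τ be a faithful irreducible complex representation of G. Then τ is isomorphic to τ_r ⊗ χ, where τ_r is the inflation along the quotient map G → G/⟨b^{p^r}⟩ ≅ C_q ⋊ C_{p^r} of a faithful irreducible complex representation of C_q ⋊ C_{p^r}, and χ is a 1-dimensional complex representation of G of order p^n (i.e. χ factors through the quotient G → C_{p^n} and is faithful on it). -/

import Mathlib

open CategoryTheory Finset

/-!
The element `b ^ p ^ r` is central, so by Schur's lemma it acts through `τ` as a scalar `c`, and
`c` has order `p ^ (n - r)` because `τ` is faithful. Choose `ζ` of order `p ^ n` with
`ζ ^ p ^ r = c` (`exists_root`): for `r < n` every `p ^ r`-th root of `c` has this order, and for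
`r = n` any primitive `p ^ n`-th root of unity will do. Let `χ` be the linear character with
`χ a = 1` and `χ b = ζ` (`exists_character`), and put `τr = τ ⊗ χ⁻¹`. This is again irreducible,
having a character of norm one, and `b ^ p ^ r` acts trivially on it by the choice of `ζ`.
Conversely, an element acting trivially on `τr` acts as a scalar on `τ`, hence is central
by faithfulness, and the centre of `G` is `⟨b ^ p ^ r⟩` (`central_iff`).
-/

/-- Schur's lemma for central elements: they act on a simple representation by scalars. -/
lemma exists_scalar_of_central {G : Type} [Group G] [Fintype G] (τ : FDRep ℂ G) [Simple τ]
    (z : G) (hz : ∀ g : G, z * g = g * z) : ∃ c : ℂ, τ.ρ z = c • (1 : τ →ₗ[ℂ] τ) := by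
  let f : τ ⟶ τ :=
    { hom := Action.ρ τ z
      comm := fun g => by
        have h := congrArg (Action.ρ τ) (hz g)
        rw [map_mul, map_mul] at h
        exact h }
  obtain ⟨c, hc⟩ := endomorphism_simple_eq_smul_id ℂ f
  refine ⟨c, ?_⟩
  have h : (c • 𝟙 τ : τ ⟶ τ).hom = Action.ρ τ z := by rw [hc]
  have h' := congrArg (fun x => x.hom.hom) h
  exact h'.symm

/-- The twist `V ⊗ χ⁻¹` of a representation by a linear character, realised on the same space. -/
noncomputable def twistInv {G : Type} [Group G] (τ : FDRep ℂ G) (χ : G →* ℂˣ) : FDRep ℂ G :=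
  FDRep.of (V := τ)
    { toFun := fun g => ((χ g)⁻¹ : ℂˣ).val • τ.ρ g
      map_one' := by simp
      map_mul' := fun g h => by
        rw [map_mul, map_mul, mul_inv, Units.val_mul, smul_mul_smul_comm] }

lemma twistInv_ρ {G : Type} [Group G] (τ : FDRep ℂ G) (χ : G →* ℂˣ) (g : G) :
    (twistInv τ χ).ρ g = (((χ g)⁻¹ : ℂˣ).val • τ.ρ g : τ →ₗ[ℂ] τ) := rfl

lemma twistInv_character {G : Type} [Group G] (τ : FDRep ℂ G) (χ : G →* ℂˣ) (g : G) :
    (twistInv τ χ).character g = ((χ g)⁻¹ : ℂˣ).val * τ.character g := by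
  have : (twistInv τ χ).character g =
    LinearMap.trace ℂ τ (((χ g)⁻¹ : ℂˣ).val • τ.ρ g : τ →ₗ[ℂ] τ) := rfl
  rw [this, map_smul, smul_eq_mul]
  rfl

/-- Twisting preserves simplicity, because it preserves the norm of the character. -/
lemma twistInv_simple {G : Type} [Group G] [Fintype G] (τ : FDRep ℂ G) [hτ : Simple τ]
    (χ : G →* ℂˣ) : Simple (twistInv τ χ) := by
  rw [FDRep.simple_iff_char_is_norm_one] at hτ ⊢
  rw [← hτ]
  refine Finset.sum_congr rfl fun g _ => ?_
  have h : (χ g : ℂ) ≠ 0 := (χ g).ne_zero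
  rw [twistInv_character, twistInv_character, map_inv, inv_inv, Units.val_inv_eq_inv_val]
  field_simp

lemma zpowers_normal {G : Type} [Group G] [Finite G] {a b : G} {j : ℕ}
    (hba : b * a * b⁻¹ = a ^ j) (hgen : Subgroup.closure {a, b} = ⊤) :
    (Subgroup.zpowers a).Normal := by
  rw [← Subgroup.normalizer_eq_top_iff, eq_top_iff, ← hgen, Subgroup.closure_le]
  rintro x (rfl | rfl)
  · exact Subgroup.le_normalizer (Subgroup.mem_zpowers x)
  · refine Subgroup.mem_normalizer_fintype ?_
    rintro _ ⟨k, rfl⟩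
    refine ⟨j * k, ?_⟩
    simp only
    rw [zpow_mul, zpow_natCast, ← hba, conj_zpow]

lemma exists_decomp {G : Type} [Group G] [Finite G] {a b : G} {j : ℕ}
    (hba : b * a * b⁻¹ = a ^ j) (hgen : Subgroup.closure {a, b} = ⊤) (g : G) :
    ∃ i k : ℤ, g = a ^ i * b ^ k := by
  have := zpowers_normal hba hgen
  have h : g ∈ Subgroup.zpowers a ⊔ Subgroup.zpowers b := by
    have : Subgroup.closure {a, b} ≤ Subgroup.zpowers a ⊔ Subgroup.zpowers b := by
      rw [Subgroup.closure_le]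
      rintro x (rfl | rfl)
      · exact Subgroup.mem_sup_left (Subgroup.mem_zpowers x)
      · exact Subgroup.mem_sup_right (Subgroup.mem_zpowers x)
    exact this (hgen ▸ Subgroup.mem_top g)
  obtain ⟨_, ⟨i, rfl⟩, _, ⟨k, rfl⟩, h⟩ := Subgroup.mem_sup_of_normal_left.1 h
  exact ⟨i, k, h.symm⟩

/-- Since `⟨a⟩` and `⟨b⟩` have coprime orders, `G / ⟨a⟩` is cyclic of order `orderOf b`, so
every `ζ` with `ζ ^ orderOf b = 1` is the value at `b` of a linear character trivial on `a`. -/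
lemma exists_character {G : Type} [Group G] [Finite G] {a b : G} {j : ℕ}
    (hba : b * a * b⁻¹ = a ^ j) (hgen : Subgroup.closure {a, b} = ⊤)
    (hcop : (orderOf a).Coprime (orderOf b)) (ζ : ℂˣ) (hζ : ζ ^ orderOf b = 1) :
    ∃ χ : G →* ℂˣ, χ a = 1 ∧ χ b = ζ := by
  have hN := zpowers_normal hba hgen
  have hdec : ∀ g : G, ∃ k : ℤ, g * (b ^ k)⁻¹ ∈ Subgroup.zpowers a := fun g => by
    obtain ⟨i, k, rfl⟩ := exists_decomp hba hgen g
    exact ⟨k, i, by simp⟩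
  choose k hk using hdec
  have key : ∀ (g : G) (l : ℤ), g * (b ^ l)⁻¹ ∈ Subgroup.zpowers a → ζ ^ k g = ζ ^ l := by
    intro g l hl
    have h1 : b ^ (k g - l) ∈ Subgroup.zpowers a := by
      have := mul_mem (inv_mem (hk g)) hl
      have h2 : (g * (b ^ k g)⁻¹)⁻¹ * (g * (b ^ l)⁻¹) = b ^ (k g - l) := by
        rw [zpow_sub]; group
      rwa [h2] at this
    have h3 : b ^ (k g - l) = 1 := by
      have := Subgroup.disjoint_def.1 (Subgroup.disjoint_of_coprime_natCard
        (H := Subgroup.zpowers a) (K := Subgroup.zpowers b)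
        (by rwa [Nat.card_zpowers, Nat.card_zpowers])) h1 ⟨_, rfl⟩
      exact this
    rw [← orderOf_dvd_iff_zpow_eq_one] at h3
    have h4 : (orderOf ζ : ℤ) ∣ k g - l :=
      (Int.natCast_dvd_natCast.2 (orderOf_dvd_of_pow_eq_one hζ)).trans h3
    exact orderOf_dvd_sub_iff_zpow_eq_zpow.1 h4
  refine ⟨MonoidHom.mk' (fun g => ζ ^ k g) fun g h => ?_, ?_, ?_⟩
  · rw [← zpow_add]
    refine key _ _ ?_
    have h1 := mul_mem (hk g) (hN.conj_mem _ (hk h) (b ^ k g))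
    have h2 : g * (b ^ k g)⁻¹ * (b ^ k g * (h * (b ^ k h)⁻¹) * (b ^ k g)⁻¹) =
      g * h * (b ^ (k g + k h))⁻¹ := by rw [zpow_add]; group
    rwa [h2] at h1
  · have := key a 0 (by simp)
    simpa using this
  · have := key b 1 (by simp)
    simpa using this

lemma conj_pow_eq {G : Type} [Group G] {a b : G} {j : ℕ} (hba : b * a * b⁻¹ = a ^ j) (k : ℕ) :
    b ^ k * a * (b ^ k)⁻¹ = a ^ j ^ k := by
  induction k with
  | zero => simp
  | succ k ih =>
    have : b ^ (k + 1) * a * (b ^ (k + 1))⁻¹ = b ^ k * (b * a * b⁻¹) * (b ^ k)⁻¹ := by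
      rw [pow_succ]; group
    rw [this, hba, ← conj_pow, ih, ← pow_mul, pow_succ]

/-- `b ^ k` commutes with `a` exactly when `j ^ k = 1` modulo the order of `a`. -/
lemma commute_pow_iff {G : Type} [Group G] {a b : G} {j : ℕ} (hba : b * a * b⁻¹ = a ^ j) (k : ℕ) :
    Commute (b ^ k) a ↔ orderOf (j : ZMod (orderOf a)) ∣ k := by
  rw [orderOf_dvd_iff_pow_eq_one, ← Nat.cast_pow, ← Nat.cast_one, ZMod.natCast_eq_natCast_iff,
    ← pow_eq_pow_iff_modEq, ← conj_pow_eq hba, pow_one, mul_inv_eq_iff_eq_mul]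
  rfl

/-- The centre of `G` is generated by `b ^ m`, where `m` is the order of the automorphism of `⟨a⟩`
induced by `b`. -/
lemma central_iff {G : Type} [Group G] [Finite G] {a b : G} {j : ℕ}
    (hba : b * a * b⁻¹ = a ^ j) (hgen : Subgroup.closure {a, b} = ⊤)
    (hprime : (orderOf a).Prime) (hj : orderOf (j : ZMod (orderOf a)) ≠ 1) (g : G) :
    (∀ h : G, g * h = h * g) ↔
      g ∈ Subgroup.zpowers (b ^ orderOf (j : ZMod (orderOf a))) := by
  have hcomm : Commute (b ^ orderOf (j : ZMod (orderOf a))) a :=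
    (commute_pow_iff hba _).2 dvd_rfl
  constructor
  · intro hg
    obtain ⟨i, k', rfl⟩ := exists_decomp hba hgen g
    obtain ⟨k, hk⟩ : ∃ k : ℕ, b ^ k = b ^ k' := by
      have : b ^ k' ∈ Submonoid.powers b := by
        rw [mem_powers_iff_mem_zpowers]; exact ⟨k', rfl⟩
      exact this
    rw [← hk] at hg ⊢
    have h1 : Commute (b ^ k) a := by
      have h0 : Commute (a ^ (-i)) a := (Commute.refl a).zpow_left _
      have := h0.mul_left (show Commute (a ^ i * b ^ k) a from hg a)
      simpa using this
    obtain ⟨l, rfl⟩ := (commute_pow_iff hba _).1 h1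
    have h2 : Commute b (a ^ i) := by
      have h0 : Commute (a ^ i * b ^ (_ * l)) b := hg b
      have := h0.mul_left ((Commute.refl b).pow_left (orderOf (j : ZMod (orderOf a)) * l)).inv_left
      simpa using this.symm
    have h3 : a ^ i = 1 := by
      by_contra hne
      apply hj
      rw [← Nat.dvd_one, ← commute_pow_iff hba, pow_one]
      -- a nontrivial power of `a` generates `⟨a⟩`, the order of `a` being prime
      have hc : IsCoprime i (orderOf a : ℤ) := by
        rw [← orderOf_dvd_iff_zpow_eq_one] at hne
        exact ((Nat.prime_iff_prime_int.1 hprime).coprime_iff_not_dvd.2 hne).symm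
      obtain ⟨u, v, huv⟩ := hc
      have h4 : a = (a ^ i) ^ u := by
        rw [← zpow_mul]
        conv_lhs => rw [← zpow_one a, ← huv, zpow_add, mul_comm v, zpow_mul a (orderOf a : ℤ)]
        simp [mul_comm]
      rw [h4]
      exact h2.zpow_right u
    rw [h3, one_mul, pow_mul]
    exact Subgroup.npow_mem_zpowers _ _
  · rintro ⟨l, rfl⟩ h
    obtain ⟨i, k, rfl⟩ := exists_decomp hba hgen h
    have hb : Commute (b ^ orderOf (j : ZMod (orderOf a))) b := (Commute.refl b).pow_left _
    exact ((hcomm.zpow_right i).mul_right (hb.zpow_right k)).zpow_left l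

/-- A root of unity `μ` of order `p ^ (n - r)` in `ℂ` has a `p ^ r`-th root of order `p ^ n`. -/
lemma exists_root {p n r : ℕ} (hp : p.Prime) (hrn : r ≤ n) (μ : ℂˣ)
    (hμ : orderOf μ = p ^ (n - r)) : ∃ ζ : ℂˣ, ζ ^ p ^ r = μ ∧ orderOf ζ = p ^ n := by
  have := Fact.mk hp
  rcases hrn.eq_or_lt with rfl | hlt
  · have h0 : p ^ r ≠ 0 := pow_ne_zero _ hp.ne_zero
    have hζ := (Complex.isPrimitiveRoot_exp (p ^ r) h0)
    have hζ' := hζ.isUnit_unit h0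
    refine ⟨_, ?_, hζ'.eq_orderOf.symm⟩
    rw [hζ'.pow_eq_one]
    have h1 : orderOf μ = 1 := by simpa using hμ
    exact (orderOf_eq_one_iff.1 h1).symm
  · have h0 : p ^ r ≠ 0 := pow_ne_zero _ hp.ne_zero
    obtain ⟨z, hz⟩ := IsAlgClosed.exists_pow_nat_eq (μ : ℂ) (Nat.pos_of_ne_zero h0)
    have hz0 : z ≠ 0 := by
      rintro rfl
      rw [zero_pow h0] at hz
      exact μ.ne_zero hz.symm
    have hζ : (Units.mk0 z hz0) ^ p ^ r = μ := Units.ext (by simpa using hz)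
    obtain ⟨d, rfl⟩ := Nat.exists_eq_add_of_lt hlt
    rw [show r + d + 1 - r = d + 1 by omega] at hμ
    refine ⟨Units.mk0 z hz0, hζ, orderOf_eq_prime_pow ?_ ?_⟩
    · rw [pow_add, pow_mul, hζ]
      intro h
      have := orderOf_dvd_of_pow_eq_one h
      rw [hμ, Nat.pow_dvd_pow_iff_le_right hp.one_lt] at this
      omega
    · rw [add_assoc, pow_add, pow_mul, hζ, ← hμ, pow_orderOf_eq_one]

/-- Let `p, q` be distinct odd primes, `G = C_q ⋊ C_{p^n}` non-abelian
(presented by `a, b` with `a^q = b^{p^n} = 1`, `b a b⁻¹ = a^j`, `j` of order `p^r` mod `q`).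
Every faithful irreducible complex representation `τ` of `G` is isomorphic to `τ_r ⊗ χ`,
where `τ_r` is the inflation along `G → G/⟨b^{p^r}⟩ ≅ C_q ⋊ C_{p^r}` of a faithful
irreducible representation of `C_q ⋊ C_{p^r}` (expressed by: `τ_r` is an irreducible
representation of `G` whose kernel is exactly `⟨b^{p^r}⟩`) and `χ` is a one-dimensional
representation of `G` of order `p^n` factoring through the quotient `G → C_{p^n} = G/⟨a⟩`.
The isomorphism `τ ≅ τ_r ⊗ χ` is expressed as the equality of characters, which determines
complex representations up to isomorphism. -/
theorem faithful_irreducible_eq_twist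
    (p q n r : ℕ) (hp : p.Prime) (hq : q.Prime) (hpodd : Odd p) (hqodd : Odd q)
    (hpq : p ≠ q) (hn : 1 ≤ n) (hr0 : 0 < r) (hrn : r ≤ n) (hrdvd : p ^ r ∣ q - 1)
    (G : Type) [Group G] [Fintype G] (a b : G) (j : ℕ)
    (ha : orderOf a = q) (hb : orderOf b = p ^ n)
    (hba : b * a * b⁻¹ = a ^ j) (hj : orderOf (j : ZMod q) = p ^ r)
    (hgen : Subgroup.closure {a, b} = ⊤)
    (τ : FDRep ℂ G) [Simple τ] (hτ : Function.Injective τ.ρ) :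
    ∃ (τr : FDRep ℂ G) (χ : G →* ℂˣ),
      Simple τr ∧
      (∀ g : G, τr.ρ g = 1 ↔ g ∈ Subgroup.zpowers (b ^ p ^ r)) ∧
      χ a = 1 ∧ orderOf χ = p ^ n ∧
      ∀ g : G, τ.character g = τr.character g * χ g := by
  subst ha
  have hcop : (orderOf a).Coprime (orderOf b) := by
    rw [hb]
    exact ((Nat.coprime_primes hq hp).2 hpq.symm).pow_right n
  have hj1 : orderOf (j : ZMod (orderOf a)) ≠ 1 := by
    rw [hj]
    exact (Nat.one_lt_pow hr0.ne' hp.one_lt).ne'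
  have hcent := central_iff hba hgen hq hj1
  rw [hj] at hcent
  have hone : (1 : τ →ₗ[ℂ] τ) ≠ 0 := by
    intro h
    have : a = 1 := hτ (by
      rw [← mul_one (τ.ρ a), ← mul_one (τ.ρ 1), h, mul_zero, mul_zero])
    rw [this, orderOf_one] at hq
    exact Nat.not_prime_one hq
  obtain ⟨c, hc⟩ := exists_scalar_of_central τ (b ^ p ^ r)
    ((hcent _).2 (Subgroup.mem_zpowers _))
  have hcpow : ∀ m : ℕ, c ^ m = 1 ↔ (b ^ p ^ r) ^ m = 1 := by
    intro m
    rw [← hτ.eq_iff, map_pow, hc, smul_pow, one_pow, map_one]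
    constructor
    · intro h; rw [h, one_smul]
    · intro h
      exact smul_left_injective ℂ hone (by simpa using h)
  have hcord : orderOf c = p ^ (n - r) := by
    rw [orderOf_eq_orderOf_iff.2 hcpow, orderOf_pow, hb,
      Nat.gcd_eq_right (pow_dvd_pow p hrn), Nat.pow_div hrn hp.pos]
  have hc0 : c ≠ 0 := by
    rintro rfl
    rw [orderOf_zero] at hcord
    exact (pow_pos hp.pos _).ne hcord
  obtain ⟨ζ, hζ, hζord⟩ := exists_root hp hrn (Units.mk0 c hc0)
    (by rw [← hcord, ← orderOf_units, Units.val_mk0])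
  obtain ⟨χ, hχa, hχb⟩ := exists_character hba hgen hcop ζ
    (by rw [hb, ← hζord, pow_orderOf_eq_one])
  refine ⟨twistInv τ χ, χ, twistInv_simple τ χ, fun g => ?_, hχa, ?_, fun g => ?_⟩
  · have hiff : ∀ g, (twistInv τ χ).ρ g = 1 ↔ τ.ρ g = (χ g : ℂ) • (1 : τ →ₗ[ℂ] τ) := by
      intro g
      have : (twistInv τ χ).ρ g = 1 ↔ (((χ g)⁻¹ : ℂˣ).val • τ.ρ g : τ →ₗ[ℂ] τ) = 1 := Iff.rfl
      rw [this, Units.val_inv_eq_inv_val, inv_smul_eq_iff₀ (χ g).ne_zero]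
    constructor
    · intro h
      rw [hiff] at h
      refine (hcent g).1 fun x => hτ ?_
      rw [map_mul, map_mul, h, smul_mul_assoc, mul_smul_comm, one_mul, mul_one]
    · -- the elements acting trivially form a subgroup, and `b ^ p ^ r` is one of them
      have hmem : b ^ p ^ r ∈ (twistInv τ χ).ρ.ker := by
        rw [MonoidHom.mem_ker, hiff, hc, map_pow, hχb, hζ, Units.val_mk0]
      intro h
      exact (Subgroup.zpowers_le.2 hmem) h
  · rw [← hζord, orderOf_eq_orderOf_iff]
    intro m
    rw [← hχb]
    constructor
    · intro h; simpa using DFunLike.congr_fun h b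
    · intro h
      ext g
      obtain ⟨i, k, rfl⟩ := exists_decomp hba hgen g
      have : (χ b ^ k) ^ m = 1 := by rw [← zpow_natCast, zpow_comm, zpow_natCast, h, one_zpow]
      simp [hχa, this]
  · rw [twistInv_character, Units.val_inv_eq_inv_val]
    have := (χ g).ne_zero
    field_simp
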